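/- Let μ and η be probability measures on ℝ^d with finite absolute first moments. For θ ∈ ℝ^d let μ_θ and η_θ denote the pushforwards of μ and η under x ↦ ⟨θ, x⟩. Then the map θ ↦ W_1(μ_θ, η_θ) is L-Lipschitz on the unit sphere S^{d−1} with L = M_1(μ) + M_1(η); that is, for all θ_1, θ_2 ∈ S^{d−1}, |W_1(μ_{θ_1}, η_{θ_1}) − W_1(μ_{θ_2}, η_{θ_2})| ≤ (M_1(μ) + M_1(η)) · ‖θ_1 − θ_2‖. -/

import Mathlib

open MeasureTheory

/-- The 1-Wasserstein distance between measures on `ℝ`, in dual form. -/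
noncomputable def W1 (μ ν : Measure ℝ) : ℝ :=
  ⨆ f : {f : ℝ → ℝ // LipschitzWith 1 f},
    |∫ x, (f : ℝ → ℝ) x ∂μ - ∫ x, (f : ℝ → ℝ) x ∂ν|

/-!
The distance `W1` satisfies the triangle inequality on finite measures of equal mass with finite
first moment, so `W1 (μ₁, η₁)` and `W1 (μ₂, η₂)` differ by at most `W1 (μ₁, μ₂) + W1 (η₁, η₂)`.
When `μ₁` and `μ₂` are the projections of one measure `μ` along `θ₁` and `θ₂`, they are coupled
through `μ`, so their distance is at most `∫ |⟨θ₁ - θ₂, x⟩| dμ ≤ M₁(μ) ‖θ₁ - θ₂‖`.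
-/

section Lipschitz

variable {X E F : Type*} [MeasurableSpace X] {μ : Measure X} [IsFiniteMeasure μ]
  [NormedAddCommGroup E] [NormedAddCommGroup F] {K : NNReal} {f : E → F} {u v : X → E}

theorem integrable_comp_of_lipschitzWith (hf : LipschitzWith K f) (hu : Integrable u μ) :
    Integrable (fun x ↦ f (u x)) μ := by
  refine ((integrable_const ‖f 0‖).add (hu.norm.const_mul (K : ℝ))).mono'
    (hf.continuous.comp_aestronglyMeasurable hu.1) (.of_forall fun x ↦ ?_)
  calc ‖f (u x)‖ ≤ ‖f 0‖ + ‖f (u x) - f 0‖ := norm_le_norm_add_norm_sub' _ _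
    _ ≤ ‖f 0‖ + K * ‖u x‖ := by gcongr; simpa using hf.norm_sub_le (u x) 0

theorem norm_integral_comp_sub_integral_comp_le [NormedSpace ℝ F] (hf : LipschitzWith K f)
    (hu : Integrable u μ) (hv : Integrable v μ) :
    ‖∫ x, f (u x) ∂μ - ∫ x, f (v x) ∂μ‖ ≤ K * ∫ x, ‖u x - v x‖ ∂μ := by
  rw [← integral_sub (integrable_comp_of_lipschitzWith hf hu)
    (integrable_comp_of_lipschitzWith hf hv), ← integral_const_mul]
  exact norm_integral_le_of_norm_le ((hu.sub hv).norm.const_mul _)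
    (.of_forall fun x ↦ hf.norm_sub_le (u x) (v x))

end Lipschitz

section W1

theorem W1_comm (μ ν : Measure ℝ) : W1 μ ν = W1 ν μ := by
  simp only [W1, abs_sub_comm]

theorem W1_le {μ ν : Measure ℝ} {C : ℝ}
    (h : ∀ f : ℝ → ℝ, LipschitzWith 1 f → |∫ x, f x ∂μ - ∫ x, f x ∂ν| ≤ C) : W1 μ ν ≤ C :=
  have : Nonempty {f : ℝ → ℝ // LipschitzWith 1 f} := ⟨⟨id, .id⟩⟩
  ciSup_le fun f ↦ h f f.2

variable {μ ν ρ : Measure ℝ} [IsFiniteMeasure μ] [IsFiniteMeasure ν] [IsFiniteMeasure ρ]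

theorem abs_integral_sub_integral_le_add_moments {f : ℝ → ℝ} (hf : LipschitzWith 1 f)
    (hμ : Integrable id μ) (hν : Integrable id ν) (hmass : μ Set.univ = ν Set.univ) :
    |∫ x, f x ∂μ - ∫ x, f x ∂ν| ≤ ∫ x, |x| ∂μ + ∫ x, |x| ∂ν := by
  have hconst : ∫ _, f 0 ∂μ = ∫ _, f 0 ∂ν := by
    simp only [integral_const, measureReal_def, hmass]
  have dist_const_le (m : Measure ℝ) [IsFiniteMeasure m] (hm : Integrable id m) :
      |∫ x, f x ∂m - ∫ _, f 0 ∂m| ≤ ∫ x, |x| ∂m := by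
    simpa using norm_integral_comp_sub_integral_comp_le hf hm (integrable_zero ℝ ℝ m)
  calc |∫ x, f x ∂μ - ∫ x, f x ∂ν|
      ≤ |∫ x, f x ∂μ - ∫ _, f 0 ∂μ| + |∫ _, f 0 ∂μ - ∫ x, f x ∂ν| := abs_sub_le ..
    _ = |∫ x, f x ∂μ - ∫ _, f 0 ∂μ| + |∫ x, f x ∂ν - ∫ _, f 0 ∂ν| := by
      rw [hconst, abs_sub_comm (∫ x, f x ∂ν)]
    _ ≤ ∫ x, |x| ∂μ + ∫ x, |x| ∂ν := add_le_add (dist_const_le μ hμ) (dist_const_le ν hν)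

theorem abs_integral_sub_integral_le_W1 {f : ℝ → ℝ} (hf : LipschitzWith 1 f)
    (hμ : Integrable id μ) (hν : Integrable id ν) (hmass : μ Set.univ = ν Set.univ) :
    |∫ x, f x ∂μ - ∫ x, f x ∂ν| ≤ W1 μ ν := by
  refine le_ciSup (f := fun g : {g : ℝ → ℝ // LipschitzWith 1 g} ↦
    |∫ x, (g : ℝ → ℝ) x ∂μ - ∫ x, (g : ℝ → ℝ) x ∂ν|) ⟨∫ x, |x| ∂μ + ∫ x, |x| ∂ν, ?_⟩ ⟨f, hf⟩
  rintro _ ⟨g, rfl⟩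
  exact abs_integral_sub_integral_le_add_moments g.2 hμ hν hmass

theorem W1_triangle (hμ : Integrable id μ) (hν : Integrable id ν) (hρ : Integrable id ρ)
    (hμν : μ Set.univ = ν Set.univ) (hνρ : ν Set.univ = ρ Set.univ) :
    W1 μ ρ ≤ W1 μ ν + W1 ν ρ :=
  W1_le fun _ hf ↦ (abs_sub_le _ _ _).trans <| add_le_add
    (abs_integral_sub_integral_le_W1 hf hμ hν hμν) (abs_integral_sub_integral_le_W1 hf hν hρ hνρ)

theorem abs_W1_sub_W1_le {μ₁ μ₂ ν₁ ν₂ : Measure ℝ} [IsFiniteMeasure μ₁] [IsFiniteMeasure μ₂]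
    [IsFiniteMeasure ν₁] [IsFiniteMeasure ν₂] (hμ₁ : Integrable id μ₁) (hμ₂ : Integrable id μ₂)
    (hν₁ : Integrable id ν₁) (hν₂ : Integrable id ν₂) (hμ : μ₁ Set.univ = μ₂ Set.univ)
    (hν : ν₁ Set.univ = ν₂ Set.univ) (hμν : μ₁ Set.univ = ν₁ Set.univ) :
    |W1 μ₁ ν₁ - W1 μ₂ ν₂| ≤ W1 μ₁ μ₂ + W1 ν₁ ν₂ := by
  have hμν₂ : μ₂ Set.univ = ν₂ Set.univ := hμ.symm.trans (hμν.trans hν)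
  have h₁ : W1 μ₁ ν₁ ≤ W1 μ₁ μ₂ + (W1 μ₂ ν₂ + W1 ν₂ ν₁) :=
    (W1_triangle hμ₁ hμ₂ hν₁ hμ (hμν₂.trans hν.symm)).trans
      (add_le_add_right (W1_triangle hμ₂ hν₂ hν₁ hμν₂ hν.symm) _)
  have h₂ : W1 μ₂ ν₂ ≤ W1 μ₂ μ₁ + (W1 μ₁ ν₁ + W1 ν₁ ν₂) :=
    (W1_triangle hμ₂ hμ₁ hν₂ hμ.symm (hμν.trans hν)).trans
      (add_le_add_right (W1_triangle hμ₁ hν₁ hν₂ hμν hν) _)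
  rw [W1_comm ν₂] at h₁
  rw [W1_comm μ₂ μ₁] at h₂
  exact abs_sub_le_iff.2 ⟨by linarith, by linarith⟩

end W1

theorem W1_map_map_le {X : Type*} [MeasurableSpace X] {μ : Measure X} [IsFiniteMeasure μ]
    {u v : X → ℝ} (hu : Integrable u μ) (hv : Integrable v μ) :
    W1 (μ.map u) (μ.map v) ≤ ∫ x, |u x - v x| ∂μ := by
  refine W1_le fun f hf ↦ ?_
  rw [integral_map hu.aemeasurable hf.continuous.aestronglyMeasurable,
    integral_map hv.aemeasurable hf.continuous.aestronglyMeasurable]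
  simpa using norm_integral_comp_sub_integral_comp_le hf hu hv

section StrongDual

variable {E : Type*} [SeminormedAddCommGroup E] [NormedSpace ℝ E] [MeasurableSpace E]
  [OpensMeasurableSpace E]

theorem integrable_strongDual {μ : Measure E} (hμ : Integrable (fun x ↦ ‖x‖) μ)
    (L : StrongDual ℝ E) : Integrable L μ :=
  (hμ.const_mul ‖L‖).mono' L.continuous.aestronglyMeasurable (.of_forall L.le_opNorm)

theorem W1_map_strongDual_le {μ : Measure E} [IsFiniteMeasure μ]
    (hμ : Integrable (fun x ↦ ‖x‖) μ) (L₁ L₂ : StrongDual ℝ E) :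
    W1 (μ.map L₁) (μ.map L₂) ≤ (∫ x, ‖x‖ ∂μ) * ‖L₁ - L₂‖ :=
  calc W1 (μ.map L₁) (μ.map L₂)
      ≤ ∫ x, ‖(L₁ - L₂) x‖ ∂μ :=
        W1_map_map_le (integrable_strongDual hμ L₁) (integrable_strongDual hμ L₂)
    _ ≤ ∫ x, ‖L₁ - L₂‖ * ‖x‖ ∂μ :=
        integral_mono (integrable_strongDual hμ (L₁ - L₂)).norm (hμ.const_mul _)
          (L₁ - L₂).le_opNorm
    _ = (∫ x, ‖x‖ ∂μ) * ‖L₁ - L₂‖ := by rw [integral_const_mul, mul_comm]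

theorem projection_W1_lipschitz_on_sphere_general (μ η : Measure E) [IsFiniteMeasure μ]
    [IsFiniteMeasure η] (hmass : μ Set.univ = η Set.univ) (hμ : Integrable (fun x ↦ ‖x‖) μ)
    (hη : Integrable (fun x ↦ ‖x‖) η) (L₁ L₂ : StrongDual ℝ E) :
    |W1 (μ.map L₁) (η.map L₁) - W1 (μ.map L₂) (η.map L₂)| ≤
      ((∫ x, ‖x‖ ∂μ) + ∫ x, ‖x‖ ∂η) * ‖L₁ - L₂‖ := by
  have integrable_id_map {m : Measure E} (hm : Integrable (fun x ↦ ‖x‖) m)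
      (L : StrongDual ℝ E) : Integrable id (m.map L) :=
    (integrable_map_measure aestronglyMeasurable_id L.measurable.aemeasurable).2
      (integrable_strongDual hm L)
  have map_univ (m : Measure E) (L : StrongDual ℝ E) : m.map L Set.univ = m Set.univ :=
    Measure.map_apply L.measurable .univ
  calc |W1 (μ.map L₁) (η.map L₁) - W1 (μ.map L₂) (η.map L₂)|
      ≤ W1 (μ.map L₁) (μ.map L₂) + W1 (η.map L₁) (η.map L₂) := by
        apply abs_W1_sub_W1_le <;> simp only [integrable_id_map, map_univ, hμ, hη, hmass]
    _ ≤ (∫ x, ‖x‖ ∂μ) * ‖L₁ - L₂‖ + (∫ x, ‖x‖ ∂η) * ‖L₁ - L₂‖ :=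
        add_le_add (W1_map_strongDual_le hμ L₁ L₂) (W1_map_strongDual_le hη L₁ L₂)
    _ = ((∫ x, ‖x‖ ∂μ) + ∫ x, ‖x‖ ∂η) * ‖L₁ - L₂‖ := (add_mul ..).symm

end StrongDual

/-- The map `θ ↦ W₁(μ_θ, η_θ)` is `(M₁(μ) + M₁(η))`-Lipschitz on the unit sphere. -/
theorem projection_W1_lipschitz_on_sphere
    {d : ℕ} (μ η : Measure (EuclideanSpace ℝ (Fin d)))
    [IsProbabilityMeasure μ] [IsProbabilityMeasure η]
    (hμ : Integrable (fun x => ‖x‖) μ) (hη : Integrable (fun x => ‖x‖) η)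
    (θ₁ θ₂ : EuclideanSpace ℝ (Fin d)) (hθ₁ : ‖θ₁‖ = 1) (hθ₂ : ‖θ₂‖ = 1) :
    |W1 (μ.map (fun x => (inner ℝ θ₁ x : ℝ))) (η.map (fun x => (inner ℝ θ₁ x : ℝ))) -
      W1 (μ.map (fun x => (inner ℝ θ₂ x : ℝ))) (η.map (fun x => (inner ℝ θ₂ x : ℝ)))| ≤
      ((∫ x, ‖x‖ ∂μ) + ∫ x, ‖x‖ ∂η) * ‖θ₁ - θ₂‖ := by
  rw [← innerSL_apply_norm (𝕜 := ℝ) (θ₁ - θ₂), map_sub]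
  exact projection_W1_lipschitz_on_sphere_general μ η (by simp) hμ hη (innerSL ℝ θ₁) (innerSL ℝ θ₂)
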